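/- Let m, n ≥ 2 be integers and let γ(t) = (x(t), y(t)) be a nonconstant T-periodic unit-speed solution of the self-shrinker profile equation with x(t) > 0, y(t) > 0 for all t, which is injective on [0, T) (an embedded closed geodesic). Then γ intersects the cone line √(m−1)·y = √(n−1)·x at least twice: there exist t₁ ≠ t₂ in [0, T) with √(m−1)·y(t_i) = √(n−1)·x(t_i) for i = 1, 2. -/

import Mathlib

/-- A unit-speed curve `γ = (x, y)` with `x, y > 0` is a solution of the self-shrinker
profile equation for `O(m) × O(n)`-invariant self-shrinkers in `ℝ^{m+n}` on the set `S`. -/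
def IsProfileSol (m n : ℕ) (x y : ℝ → ℝ) (S : Set ℝ) : Prop :=
  ∀ t ∈ S, 0 < x t ∧ 0 < y t ∧
    DifferentiableAt ℝ x t ∧ DifferentiableAt ℝ (deriv x) t ∧
    DifferentiableAt ℝ y t ∧ DifferentiableAt ℝ (deriv y) t ∧
    (deriv x t) ^ 2 + (deriv y t) ^ 2 = 1 ∧
    -(deriv (deriv x) t) * deriv y t + deriv x t * deriv (deriv y) t =
      (x t * deriv y t - deriv x t * y t) / 2
        + ((n : ℝ) - 1) * deriv x t / y t - ((m : ℝ) - 1) * deriv y t / x t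

/-!
For `a = m - 1` and `b = n - 1` the profile curves are the unit-speed geodesics of the plane with
length element `φ ds`, where `φ = x ^ a * y ^ b * exp (-(x² + y²) / 4)`. The `φ`-weighted angular
momentum `φ * (x y' - y x')` therefore changes at the rate at which `φ` changes under rotations,
`∂φ/∂θ = φ * (b * x / y - a * y / x)`, which vanishes exactly on the cone `a y² = b x²`. Along a
closed geodesic this momentum is periodic, hence has a maximum and a minimum in each period; they
lie on the cone.
-/

open Set Topology

theorem exists_ne_deriv_eq_zero_of_periodic {f : ℝ → ℝ} {T : ℝ} (hper : Function.Periodic f T)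
    (hT : 0 < T) (hf : Continuous f) (a : ℝ) :
    ∃ t₁ ∈ Ico a (a + T), ∃ t₂ ∈ Ico a (a + T), t₁ ≠ t₂ ∧ deriv f t₁ = 0 ∧ deriv f t₂ = 0 := by
  have hrange : IsCompact (range f) := hper.compact_of_continuous hT.ne' hf
  obtain ⟨_, ⟨s, rfl⟩, hs⟩ := hrange.exists_isGreatest (range_nonempty f)
  obtain ⟨p, hp, hsp⟩ := hper.exists_mem_Ico hT s a
  have hmax : ∀ t, f t ≤ f p := fun t => hsp ▸ hs (mem_range_self t)
  obtain ⟨_, ⟨r, rfl⟩, hr⟩ := hrange.exists_isLeast (range_nonempty f)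
  obtain ⟨q, hq, hrq⟩ := hper.exists_mem_Ico hT r a
  have hmin : ∀ t, f q ≤ f t := fun t => hrq ▸ hr (mem_range_self t)
  rcases eq_or_ne p q with rfl | hpq
  · have hconst : ∀ t, deriv f t = 0 := fun t =>
      IsLocalMax.deriv_eq_zero (.of_forall fun s => (hmax s).trans (hmin t))
    exact ⟨a, ⟨le_rfl, by linarith⟩, a + T / 2, ⟨by linarith, by linarith⟩, by linarith,
      hconst _, hconst _⟩
  · exact ⟨p, hp, q, hq, hpq, IsLocalMax.deriv_eq_zero (.of_forall hmax),
      IsLocalMin.deriv_eq_zero (.of_forall hmin)⟩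

theorem mul_add_mul_eq_zero_of_sq_add_sq_eq_one {u v : ℝ → ℝ} {u' v' t : ℝ}
    (hu : HasDerivAt u u' t) (hv : HasDerivAt v v' t) (h : ∀ᶠ s in 𝓝 t, u s ^ 2 + v s ^ 2 = 1) :
    u t * u' + v t * v' = 0 := by
  have hconst : HasDerivAt (fun s => u s ^ 2 + v s ^ 2) 0 t :=
    (hasDerivAt_const t 1).congr_of_eventuallyEq h
  have hsum : HasDerivAt (fun s => u s ^ 2 + v s ^ 2) (2 * (u t * u' + v t * v')) t :=
    ((hu.fun_pow 2).fun_add (hv.fun_pow 2)).congr_deriv (by push_cast; ring)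
  linarith [hsum.unique hconst]

theorem hasDerivAt_angularMomentum_of_unitSpeed {x y x' y' : ℝ → ℝ} {x'' y'' t : ℝ}
    (hx : HasDerivAt x (x' t) t) (hy : HasDerivAt y (y' t) t)
    (hx' : HasDerivAt x' x'' t) (hy' : HasDerivAt y' y'' t)
    (hspeed : ∀ᶠ s in 𝓝 t, x' s ^ 2 + y' s ^ 2 = 1) :
    HasDerivAt (fun s => x s * y' s - y s * x' s)
      ((-x'' * y' t + x' t * y'') * (x t * x' t + y t * y' t)) t := by
  have hperp := mul_add_mul_eq_zero_of_sq_add_sq_eq_one hx' hy' hspeed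
  have hunit := hspeed.self_of_nhds
  refine ((hx.fun_mul hy').fun_sub (hy.fun_mul hx')).congr_deriv ?_
  linear_combination (y t * x'' - x t * y'') * hunit + (x t * y' t - y t * x' t) * hperp

/-- The density `φ` whose geodesics, i.e. those of the conformal metric `φ² (du² + dv²)` on the open
quadrant, are the profile curves. It is the Gaussian weight of `ℝ^{m+n}` times the volume
of an orbit of `O(m) × O(n)`, up to a constant, for `a = m - 1` and `b = n - 1`. -/
noncomputable def profileDensity (a b u v : ℝ) : ℝ :=
  u ^ a * v ^ b * Real.exp (-(u ^ 2 + v ^ 2) / 4)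

theorem profileDensity_pos (a b : ℝ) {u v : ℝ} (hu : 0 < u) (hv : 0 < v) :
    0 < profileDensity a b u v := by
  unfold profileDensity
  positivity

theorem hasDerivAt_profileDensity (a b : ℝ) {x y : ℝ → ℝ} {x' y' t : ℝ}
    (hx : HasDerivAt x x' t) (hy : HasDerivAt y y' t) (hx₀ : 0 < x t) (hy₀ : 0 < y t) :
    HasDerivAt (fun s => profileDensity a b (x s) (y s))
      (profileDensity a b (x t) (y t) *
        (a * x' / x t + b * y' / y t - (x t * x' + y t * y') / 2)) t := by
  have hexp := (((hx.fun_pow 2).fun_add (hy.fun_pow 2)).fun_neg.div_const 4).exp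
  have hpow := (hx.rpow_const (p := a) (.inl hx₀.ne')).fun_mul
    (hy.rpow_const (p := b) (.inl hy₀.ne'))
  refine (hpow.fun_mul hexp).congr_deriv ?_
  rw [Real.rpow_sub_one hx₀.ne', Real.rpow_sub_one hy₀.ne', profileDensity]
  push_cast
  ring

/-- A curve `(x, y)` in the open quadrant, defined for all times, that solves the unit-speed
self-shrinker profile equation with real weights `a` and `b` in place of the integers `m - 1` and
`n - 1`. As in `IsProfileSol`, velocities and accelerations are given by `deriv`. -/
structure IsProfileGeodesic (a b : ℝ) (x y : ℝ → ℝ) : Prop where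
  x_pos : ∀ t, 0 < x t
  y_pos : ∀ t, 0 < y t
  differentiable_x : Differentiable ℝ x
  differentiable_y : Differentiable ℝ y
  differentiable_deriv_x : Differentiable ℝ (deriv x)
  differentiable_deriv_y : Differentiable ℝ (deriv y)
  unit_speed : ∀ t, deriv x t ^ 2 + deriv y t ^ 2 = 1
  curvature_eq : ∀ t, -deriv (deriv x) t * deriv y t + deriv x t * deriv (deriv y) t =
    (x t * deriv y t - deriv x t * y t) / 2 + b * deriv x t / y t - a * deriv y t / x t

theorem IsProfileSol.isProfileGeodesic {m n : ℕ} {x y : ℝ → ℝ} (h : IsProfileSol m n x y univ) :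
    IsProfileGeodesic (m - 1) (n - 1) x y := by
  choose hx hy hdx hddx hdy hddy hunit hcurv using fun t => h t (mem_univ t)
  exact ⟨hx, hy, hdx, hdy, hddx, hddy, hunit, hcurv⟩

/-- The angular momentum about the origin of the curve `(x, y)`, weighted by `profileDensity`. -/
noncomputable def weightedAngularMomentum (a b : ℝ) (x y : ℝ → ℝ) (t : ℝ) : ℝ :=
  profileDensity a b (x t) (y t) * (x t * deriv y t - y t * deriv x t)

theorem weightedAngularMomentum_periodic (a b : ℝ) {x y : ℝ → ℝ} {T : ℝ}
    (hx : Function.Periodic x T) (hy : Function.Periodic y T) :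
    Function.Periodic (weightedAngularMomentum a b x y) T := by
  have periodic_deriv {f : ℝ → ℝ} (hf : Function.Periodic f T) (t : ℝ) :
      deriv f (t + T) = deriv f t := by
    rw [← deriv_comp_add_const, hf.funext]
  intro t
  simp only [weightedAngularMomentum, hx t, hy t, periodic_deriv hx, periodic_deriv hy]

namespace IsProfileGeodesic

variable {a b : ℝ} {x y : ℝ → ℝ}

theorem hasDerivAt_weightedAngularMomentum (h : IsProfileGeodesic a b x y) (t : ℝ) :
    HasDerivAt (weightedAngularMomentum a b x y)
      (profileDensity a b (x t) (y t) * (b * x t / y t - a * y t / x t)) t := by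
  have hx := (h.differentiable_x t).hasDerivAt
  have hy := (h.differentiable_y t).hasDerivAt
  have hφ := hasDerivAt_profileDensity a b hx hy (h.x_pos t) (h.y_pos t)
  have hL := hasDerivAt_angularMomentum_of_unitSpeed hx hy (h.differentiable_deriv_x t).hasDerivAt
    (h.differentiable_deriv_y t).hasDerivAt (.of_forall h.unit_speed)
  refine (hφ.fun_mul hL).congr_deriv ?_
  rw [h.curvature_eq t]
  linear_combination
    profileDensity a b (x t) (y t) * (b * x t / y t - a * y t / x t) * h.unit_speed t

theorem deriv_weightedAngularMomentum_eq_zero_iff (h : IsProfileGeodesic a b x y) {t : ℝ} :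
    deriv (weightedAngularMomentum a b x y) t = 0 ↔ a * y t ^ 2 = b * x t ^ 2 := by
  rw [(h.hasDerivAt_weightedAngularMomentum t).deriv,
    mul_eq_zero_iff_left (profileDensity_pos a b (h.x_pos t) (h.y_pos t)).ne', sub_eq_zero,
    div_eq_div_iff (h.y_pos t).ne' (h.x_pos t).ne', mul_assoc, mul_assoc, ← sq, ← sq, eq_comm]

end IsProfileGeodesic

theorem sqrt_mul_eq_sqrt_mul_of_mul_sq_eq {a b x y : ℝ} (hx : 0 ≤ x) (hy : 0 ≤ y)
    (h : a * y ^ 2 = b * x ^ 2) : √a * y = √b * x := by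
  rw [← Real.sqrt_sq hy, ← Real.sqrt_sq hx, ← Real.sqrt_mul' a (sq_nonneg y), h,
    Real.sqrt_mul' b (sq_nonneg x)]

theorem embedded_closed_geodesic_meets_cone_line_twice_general {a b T : ℝ} (hT : 0 < T)
    {x y : ℝ → ℝ} (hx : Function.Periodic x T) (hy : Function.Periodic y T)
    (h : IsProfileGeodesic a b x y) :
    ∃ t₁ ∈ Ico 0 T, ∃ t₂ ∈ Ico 0 T, t₁ ≠ t₂ ∧
      a * y t₁ ^ 2 = b * x t₁ ^ 2 ∧ a * y t₂ ^ 2 = b * x t₂ ^ 2 := by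
  have hcont : Continuous (weightedAngularMomentum a b x y) :=
    continuous_iff_continuousAt.2 fun t => (h.hasDerivAt_weightedAngularMomentum t).continuousAt
  simpa only [zero_add, h.deriv_weightedAngularMomentum_eq_zero_iff] using
    exists_ne_deriv_eq_zero_of_periodic (weightedAngularMomentum_periodic a b hx hy) hT hcont 0

/-- an embedded closed geodesic — a nonconstant `T`-periodic unit-speed
solution `γ = (x, y)` of the self-shrinker profile equation with `x, y > 0`, injective
on `[0, T)` — intersects the cone line `√(m−1)·y = √(n−1)·x` at least twice. -/
theorem embedded_closed_geodesic_meets_cone_line_twice (m n : ℕ) (hm : 2 ≤ m)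
    (hn : 2 ≤ n) (T : ℝ) (hT : 0 < T) (x y : ℝ → ℝ)
    (hperx : ∀ t, x (t + T) = x t) (hpery : ∀ t, y (t + T) = y t)
    (hsol : IsProfileSol m n x y Set.univ)
    (hinj : Set.InjOn (fun t => (x t, y t)) (Set.Ico 0 T)) :
    ∃ t₁ ∈ Set.Ico 0 T, ∃ t₂ ∈ Set.Ico 0 T, t₁ ≠ t₂ ∧
      Real.sqrt ((m : ℝ) - 1) * y t₁ = Real.sqrt ((n : ℝ) - 1) * x t₁ ∧
      Real.sqrt ((m : ℝ) - 1) * y t₂ = Real.sqrt ((n : ℝ) - 1) * x t₂ := by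
  have h := hsol.isProfileGeodesic
  obtain ⟨t₁, ht₁, t₂, ht₂, hne, hcone₁, hcone₂⟩ :=
    embedded_closed_geodesic_meets_cone_line_twice_general hT hperx hpery h
  exact ⟨t₁, ht₁, t₂, ht₂, hne,
    sqrt_mul_eq_sqrt_mul_of_mul_sq_eq (h.x_pos t₁).le (h.y_pos t₁).le hcone₁,
    sqrt_mul_eq_sqrt_mul_of_mul_sq_eq (h.x_pos t₂).le (h.y_pos t₂).le hcone₂⟩
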